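/- Let G be a distribution function on ℝ whose integrated tail distribution G^s is long-tailed. Then Ḡ(y) = o(Ḡ^s(y)) as y → ∞. -/

import Mathlib

open MeasureTheory ProbabilityTheory Filter Set

noncomputable section

/-- The (upper) tail `H̄(y) = μ((y,∞))` of a (probability) measure on `ℝ`. -/
def mtail (μ : Measure ℝ) (y : ℝ) : ℝ := (μ (Set.Ioi y)).toReal

/-- The integrated (second-tail) distribution tail `H̄ˢ(y) = min(1, ∫_y^∞ H̄(t) dt)`. -/
def mtailInt (μ : Measure ℝ) (y : ℝ) : ℝ := min 1 (∫ t in Set.Ioi y, mtail μ t)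

/-- Convolution of two measures on `ℝ` (the distribution of a sum of independent r.v.s). -/
def mconv (μ ν : Measure ℝ) : Measure ℝ := Measure.map (fun p : ℝ × ℝ => p.1 + p.2) (μ.prod ν)

/-- A distribution on `ℝ₊` is subexponential if its tail is everywhere positive and
`H̄^{*2}(y)/H̄(y) → 2` as `y → ∞`. -/
def Subexp (μ : Measure ℝ) : Prop :=
  (∀ y, 0 < mtail μ y) ∧
  Tendsto (fun y => mtail (mconv μ μ) y / mtail μ y) atTop (nhds 2)

/-- A tail function `f` is long-tailed if it is everywhere positive and
`f(y+z)/f(y) → 1` as `y → ∞` for every fixed `z > 0`. -/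
def LongTailedFun (f : ℝ → ℝ) : Prop :=
  (∀ y, 0 < f y) ∧ ∀ z > 0, Tendsto (fun y => f (y + z) / f y) atTop (nhds 1)

/-- The probability measure on `ℝ` whose distribution function is the integrated-tail
distribution `Hˢ`, i.e. whose tail is `H̄ˢ(y) = min(1, ∫_y^∞ H̄(t) dt)`. -/
def intTailMeasure (μ : Measure ℝ) : Measure ℝ :=
  (volume.restrict {t : ℝ | ∫ s in Set.Ioi t, mtail μ s < 1}).withDensity
    (fun t => ENNReal.ofReal (mtail μ t))

/-- The integrated-tail distribution `Hˢ` is subexponential. -/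
def SubexpIntTail (μ : Measure ℝ) : Prop := Subexp (intTailMeasure μ)

/-- The `n`-th regeneration cycle `Z_n = (τ_n; X_{T_{n-1}+1}, …, X_{T_n})` of a process `X`
with regeneration times `T`, encoded as the cycle length together with the (padded) cycle
path. -/
def cycle {Ω 𝒳 : Type*} (X : ℕ → Ω → 𝒳) (T : ℕ → Ω → ℕ) (n : ℕ) (ω : Ω) :
    ℕ × (ℕ → 𝒳 ⊕ Unit) :=
  let start : ℕ := if n = 0 then 0 else T (n - 1) ω
  (T n ω - start,
   fun i => if i < T n ω - start then Sum.inl (X (start + 1 + i) ω) else Sum.inr ())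

/-- **Property 3, first part.**  If the integrated tail distribution `Gˢ` of `G` is
long-tailed, then `Ḡ(y) = o(Ḡˢ(y))` as `y → ∞`. -/
theorem statement12
    (G : Measure ℝ) [IsProbabilityMeasure G]
    (hlong : LongTailedFun (mtailInt G)) :
    (fun y => mtail G y) =o[atTop] fun y => mtailInt G y := by
  obtain ⟨hpos, hlim⟩ := hlong
  have hint : ∀ y, IntegrableOn (mtail G) (Set.Ioi y) := by
    intro y
    by_contra h
    have h1 := hpos y
    have h2 : ∫ t in Set.Ioi y, mtail G t = 0 := integral_undef h
    simp [mtailInt, h2] at h1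
  have hanti : Antitone (mtail G) := by
    intro a b hab
    exact ENNReal.toReal_mono (measure_ne_top _ _) (measure_mono (Set.Ioi_subset_Ioi hab))
  have hnn : ∀ y, 0 ≤ mtail G y := fun y => ENNReal.toReal_nonneg
  have hsplit : ∀ a b, a ≤ b → ∫ t in Set.Ioi a, mtail G t =
      (∫ t in a..b, mtail G t) + ∫ t in Set.Ioi b, mtail G t := by
    intro a b _
    exact (intervalIntegral.integral_interval_add_Ioi (hint a) (hint b)).symm
  have hI0 : Tendsto (fun y => ∫ t in Set.Ioi y, mtail G t) atTop (nhds 0) := by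
    have h1 := intervalIntegral_tendsto_integral_Ioi 0 (hint 0) tendsto_id
    have h2 := h1.const_sub (∫ t in Set.Ioi (0:ℝ), mtail G t)
    rw [sub_self] at h2
    refine h2.congr' ?_
    filter_upwards [eventually_ge_atTop 0] with y hy
    have := hsplit 0 y hy
    simp only [id]
    linarith
  have hev : ∀ᶠ y in atTop, mtailInt G y = ∫ t in Set.Ioi y, mtail G t := by
    filter_upwards [hI0.eventually (gt_mem_nhds (zero_lt_one))] with y hy
    exact min_eq_right hy.le
  have hsh : Tendsto (fun y : ℝ => y - 1) atTop atTop := tendsto_atTop_add_const_right _ (-1) tendsto_id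
  have hr : Tendsto (fun y => mtailInt G (y - 1) / mtailInt G y - 1) atTop (nhds 0) := by
    have h1 := (((hlim 1 one_pos).comp hsh).inv₀ one_ne_zero).sub_const 1
    simpa [Function.comp_def] using h1
  rw [Asymptotics.isLittleO_iff_tendsto (fun y hy => absurd hy (hpos y).ne')]
  refine squeeze_zero' (Eventually.of_forall fun y => div_nonneg (hnn y) (hpos y).le) ?_ hr
  filter_upwards [hev, hsh.eventually hev] with y h1 h2
  have h3 := hsplit (y - 1) y (by linarith)
  have h4 : mtail G y ≤ ∫ t in (y-1)..y, mtail G t := by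
    have h5 : ∫ t in (y-1)..y, mtail G y ≤ ∫ t in (y-1)..y, mtail G t := by
      apply intervalIntegral.integral_mono_on (by linarith) (by simp) hanti.intervalIntegrable
      intro x hx
      exact hanti hx.2
    simpa using h5
  have hp := hpos y
  rw [div_le_iff₀ hp, sub_mul, div_mul_cancel₀ _ hp.ne', h2, h1]
  linarith
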